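/- Let n ≥ 1, let χ be an irreducible complex character of the symmetric group S_n, and let g ∈ S_n be an element with χ(g) ≠ 0. Then the order of g divides n!/χ(1); equivalently, o(g)·χ(1) divides n! = |S_n|. -/

import Mathlib

/-!
Frobenius' formula writes the irreducible characters of the symmetric group, up to sign, as
coefficients of the product of the Vandermonde determinant with the power sum `p_g` of the cycle
type of `g`. These coefficients are the class functions `frobeniusFunction α`. They are integral
combinations of permutation characters, and the Jacobi–Trudi identity shows that those with
distinct `αᵢ` have norm `1`; since no class function `c` with `c 1 ≠ 0` is orthogonal to all of
them, the equality case of the Cauchy–Schwarz inequality identifies an irreducible character with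
one of them up to sign.

At `g = 1` the coefficient is a determinant, whose evaluation is the hook length formula
`χ(1) · ∏ hooks = n!`. If `g` has a cycle of length `m`, then `p_g` is divisible by the power sum
`p_m`, so `χ(g) ≠ 0` forces some `αᵢ - m` to be a natural number different from all `αⱼ`, that is,
forces `m` to be a hook length. Hence every cycle length of `g`, and so its order, divides the
product of the hook lengths.
-/

open Finset

namespace SymmetricGroupCharacter

section JacobiTrudi

variable {R : Type*} [CommRing R] {N : ℕ}

/-- The generating series `∏ᵢ 1 / (1 - xᵢ T)` of the complete homogeneous symmetric polynomials
in the family `x`. -/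
noncomputable def completeSeries {σ : Type*} [Fintype σ] (x : σ → R) : PowerSeries R :=
  ∏ i, PowerSeries.mk fun n => x i ^ n

theorem coeff_completeSeries {σ : Type*} [Fintype σ] [DecidableEq σ] (x : σ → R) (b : ℕ) :
    PowerSeries.coeff b (completeSeries x) =
      ∑ l ∈ finsuppAntidiag (univ : Finset σ) b, ∏ i, x i ^ l i := by
  simp only [completeSeries, PowerSeries.coeff_prod, PowerSeries.coeff_mk]

theorem one_sub_C_mul_X_mul_mk_pow (r : R) :
    (1 - PowerSeries.C r * PowerSeries.X) * PowerSeries.mk (fun n => r ^ n) = 1 := by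
  ext n
  cases n with
  | zero => simp
  | succ n =>
    simp [sub_mul, mul_assoc, PowerSeries.coeff_one, PowerSeries.coeff_succ_X_mul, pow_succ']

/-- The polynomial `∏_{l ≠ k} (1 - x_l T)`, which turns `completeSeries x` into the geometric series
of `x k`. -/
noncomputable def cofactorPolynomial (x : Fin N → R) (k : Fin N) : Polynomial R :=
  ∏ l ∈ univ.erase k, (1 - Polynomial.C (x l) * Polynomial.X)

theorem natDegree_cofactorPolynomial_lt (x : Fin N → R) (k : Fin N) :
    (cofactorPolynomial x k).natDegree < N := by
  have factor_le (l : Fin N) : (1 - Polynomial.C (x l) * Polynomial.X).natDegree ≤ 1 := by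
    compute_degree
  calc (cofactorPolynomial x k).natDegree
      ≤ ∑ l ∈ univ.erase k, (1 - Polynomial.C (x l) * Polynomial.X : Polynomial R).natDegree :=
        Polynomial.natDegree_prod_le _ _
    _ ≤ ∑ _l ∈ univ.erase k, 1 := sum_le_sum fun l _ => factor_le l
    _ < N := by simpa using k.pos

theorem cofactorPolynomial_mul_completeSeries (x : Fin N → R) (k : Fin N) :
    (cofactorPolynomial x k : PowerSeries R) * completeSeries x =
      PowerSeries.mk fun n => x k ^ n := by
  have coe_cofactor : (cofactorPolynomial x k : PowerSeries R) =
      ∏ l ∈ univ.erase k, (1 - PowerSeries.C (x l) * PowerSeries.X) := by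
    rw [cofactorPolynomial, ← Polynomial.coeToPowerSeries.ringHom_apply, map_prod]
    simp
  rw [coe_cofactor, completeSeries, ← mul_prod_erase _ _ (mem_univ k), mul_left_comm,
    ← prod_mul_distrib]
  simp only [one_sub_C_mul_X_mul_mk_pow, prod_const_one, mul_one]

/-- The Jacobi–Trudi matrix, with entries the complete homogeneous polynomials `h_{aᵢ - j}(x)`
(zero for `aᵢ < j`). -/
noncomputable def jacobiTrudi (x : Fin N → R) (a : Fin N → ℕ) : Matrix (Fin N) (Fin N) R :=
  Matrix.of fun i j => PowerSeries.coeff (a i) (PowerSeries.X ^ (j : ℕ) * completeSeries x)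

theorem pow_eq_jacobiTrudi_mul (x : Fin N → R) (a : Fin N → ℕ) :
    Matrix.of (fun i k => x k ^ a i) =
      jacobiTrudi x a * Matrix.of fun (j k : Fin N) => (cofactorPolynomial x k).coeff j := by
  ext i k
  have geometric := congrArg (PowerSeries.coeff (a i)) (cofactorPolynomial_mul_completeSeries x k)
  rw [(cofactorPolynomial x k).as_sum_range_C_mul_X_pow' (natDegree_cofactorPolynomial_lt x k),
    ← Polynomial.coeToPowerSeries.ringHom_apply, map_sum, sum_mul, map_sum,
    ← Fin.sum_univ_eq_sum_range (fun j => PowerSeries.coeff (a i) (_ * _)),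
    PowerSeries.coeff_mk] at geometric
  rw [Matrix.of_apply, Matrix.mul_apply, ← geometric]
  refine sum_congr rfl fun j _ => ?_
  rw [Polynomial.coeToPowerSeries.ringHom_apply, Polynomial.coe_mul, Polynomial.coe_C,
    Polynomial.coe_pow, Polynomial.coe_X, mul_assoc, PowerSeries.coeff_C_mul, mul_comm]
  rfl

theorem det_jacobiTrudi_val (x : Fin N → R) : (jacobiTrudi x fun i => (i : ℕ)).det = 1 := by
  have lower : (jacobiTrudi x fun i => (i : ℕ)).BlockTriangular OrderDual.toDual := by
    intro i j hij
    have hij : (i : ℕ) < j := hij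
    rw [jacobiTrudi, Matrix.of_apply, PowerSeries.coeff_X_pow_mul', if_neg (not_le.mpr hij)]
  rw [Matrix.det_of_isLowerTriangular _ lower]
  refine prod_eq_one fun i _ => ?_
  simp [jacobiTrudi, PowerSeries.coeff_X_pow_mul', completeSeries, map_prod]

theorem det_jacobiTrudi_mul_det_vandermonde (x : Fin N → R) (a : Fin N → ℕ) :
    (jacobiTrudi x a).det * (Matrix.vandermonde x).det =
      (Matrix.of fun i k => x k ^ a i).det := by
  have vandermonde_eq : (Matrix.vandermonde x).det =
      (Matrix.of fun (j k : Fin N) => (cofactorPolynomial x k).coeff j).det := by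
    have transpose_eq : (Matrix.vandermonde x).transpose =
        Matrix.of fun (i k : Fin N) => x k ^ (i : ℕ) := rfl
    rw [← Matrix.det_transpose, transpose_eq, pow_eq_jacobiTrudi_mul x fun i => (i : ℕ),
      Matrix.det_mul, det_jacobiTrudi_val, one_mul]
  rw [vandermonde_eq, ← Matrix.det_mul, ← pow_eq_jacobiTrudi_mul]

end JacobiTrudi

section Words

variable {ι σ : Type*} [Fintype ι]

/-- The content of a word `f : ι → σ`: the number of occurrences of each letter. -/
noncomputable def content (f : ι → σ) : σ →₀ ℕ :=
  ∑ k, Finsupp.single (f k) 1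

theorem content_apply [DecidableEq σ] (f : ι → σ) (s : σ) : content f s = #{k | f k = s} := by
  simp [content, Finsupp.finsetSum_apply, Finsupp.single_apply]

theorem content_comp_equiv {κ : Type*} [Fintype κ] (f : ι → σ) (e : κ ≃ ι) :
    content (f ∘ e) = content f :=
  e.sum_comp fun k => Finsupp.single (f k) 1

theorem degree_content (f : ι → σ) : (content f).degree = Fintype.card ι := by
  simp [content, map_sum]

theorem exists_content_eq {γ : σ →₀ ℕ} (hγ : γ.degree = Fintype.card ι) :
    ∃ f : ι → σ, content f = γ := by
  classical
  obtain ⟨l, hl⟩ : ∃ l : List σ, (l : Multiset σ) = Finsupp.toMultiset γ := Quot.exists_rep _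
  have length_eq : Fintype.card ι = l.length := by
    rw [← hγ, ← Multiset.coe_card, hl, Finsupp.card_toMultiset]
    rfl
  let e : ι ≃ Fin l.length := Fintype.equivFinOfCardEq length_eq
  refine ⟨l.get ∘ e, Finsupp.orderIsoMultiset.injective ?_⟩
  rw [content_comp_equiv, content, Finsupp.coe_orderIsoMultiset, map_sum, ← hl]
  simp only [Finsupp.toMultiset_single, one_smul]
  conv_rhs => rw [← List.ofFn_get l, ← Fin.univ_val_map, ← Multiset.sum_map_singleton (.map _ _),
    Multiset.map_map]
  rfl

theorem exists_perm_of_content_eq {f f' : ι → σ} (h : content f = content f') :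
    ∃ e : Equiv.Perm ι, f' ∘ e = f := by
  classical
  have fiber_card (s : σ) : Fintype.card {k // f k = s} = Fintype.card {k // f' k = s} := by
    simpa only [content_apply, Fintype.card_subtype] using DFunLike.congr_fun h s
  exact ⟨Equiv.ofFiberEquiv fun s => Fintype.equivOfCardEq (fiber_card s),
    funext (Equiv.ofFiberEquiv_map _)⟩

/-- The words indexed by `ι` with content `γ`. -/
abbrev Word (ι : Type*) {σ : Type*} [Fintype ι] (γ : σ →₀ ℕ) : Type _ :=
  {f : ι → σ // content f = γ}

instance (γ : σ →₀ ℕ) : MulAction (Equiv.Perm ι) (Word ι γ) where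
  smul g w := ⟨w.1 ∘ g.symm, (content_comp_equiv _ _).trans w.2⟩
  one_smul _ := rfl
  mul_smul _ _ _ := rfl

theorem mem_fixedBy_word_iff {γ : σ →₀ ℕ} (g : Equiv.Perm ι) (w : Word ι γ) :
    w ∈ MulAction.fixedBy (Word ι γ) g ↔ w.1 ∘ g = w.1 := by
  rw [MulAction.mem_fixedBy, ← Subtype.coe_inj, eq_comm]
  exact g.eq_comp_symm w.1 w.1

instance (γ : σ →₀ ℕ) : MulAction.IsPretransitive (Equiv.Perm ι) (Word ι γ) where
  exists_smul_eq w w' := by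
    obtain ⟨e, he⟩ := exists_perm_of_content_eq (w.2.trans w'.2.symm)
    exact ⟨e, Subtype.ext ((e.comp_symm_eq w'.1 w.1).mpr he.symm)⟩

theorem sum_card_fixedBy_word [DecidableEq ι] [Finite σ] {γ : σ →₀ ℕ}
    (hγ : γ.degree = Fintype.card ι) :
    ∑ g : Equiv.Perm ι, Nat.card (MulAction.fixedBy (Word ι γ) g) = (Fintype.card ι).factorial := by
  classical
  obtain ⟨f, hf⟩ := exists_content_eq hγ
  have : Fintype (Word ι γ) := Fintype.ofFinite _
  have : Nonempty (Word ι γ) := ⟨⟨f, hf⟩⟩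
  have one_orbit : Fintype.card (MulAction.orbitRel.Quotient (Equiv.Perm ι) (Word ι γ)) = 1 :=
    Fintype.card_eq_one_iff_nonempty_unique.mpr
      ((MulAction.pretransitive_iff_unique_quotient_of_nonempty _ _).mp inferInstance)
  simp only [Nat.card_eq_fintype_card]
  rw [MulAction.sum_card_fixedBy_eq_card_orbits_mul_card_group, one_orbit, one_mul,
    Fintype.card_perm]

variable [DecidableEq ι] [Fintype σ] [DecidableEq σ]

theorem card_fixedBy_word (γ : σ →₀ ℕ) (g : Equiv.Perm ι) :
    Nat.card (MulAction.fixedBy (Word ι γ) g) = #{f : ι → σ | f ∘ g = f ∧ content f = γ} := by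
  rw [← Fintype.card_subtype, ← Nat.card_eq_fintype_card]
  refine Nat.card_congr ((Equiv.subtypeEquivRight fun w => mem_fixedBy_word_iff g w).trans ?_)
  exact (Equiv.subtypeSubtypeEquivSubtypeInter (fun f => content f = γ) (fun f => f ∘ g = f)).trans
    (Equiv.subtypeEquivRight fun f => and_comm)

theorem sum_sum_invariant_word {M : Type*} [AddCommMonoid M] (φ : (σ →₀ ℕ) → M) :
    ∑ g : Equiv.Perm ι, ∑ f : ι → σ with f ∘ g = f, φ (content f) =
      (Fintype.card ι).factorial • ∑ γ ∈ finsuppAntidiag univ (Fintype.card ι), φ γ := by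
  have group_by_content (g : Equiv.Perm ι) :
      ∑ f : ι → σ with f ∘ g = f, φ (content f) = ∑ γ ∈ finsuppAntidiag univ (Fintype.card ι),
        Nat.card (MulAction.fixedBy (Word ι γ) g) • φ γ := by
    have mem_antidiag (f : ι → σ) : content f ∈ finsuppAntidiag univ (Fintype.card ι) := by
      rw [mem_finsuppAntidiag, ← degree_content f, Finsupp.degree_eq_sum]
      exact ⟨rfl, subset_univ _⟩
    rw [← sum_fiberwise_of_maps_to fun f _ => mem_antidiag f]
    refine sum_congr rfl fun γ _ => ?_
    rw [card_fixedBy_word, ← filter_filter, ← sum_const]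
    exact sum_congr rfl fun f hf => by rw [(mem_filter.mp hf).2]
  simp only [group_by_content]
  rw [sum_comm, smul_sum]
  refine sum_congr rfl fun γ hγ => ?_
  rw [← sum_smul, sum_card_fixedBy_word]
  rw [Finsupp.degree_eq_sum, (mem_finsuppAntidiag.mp hγ).1]

end Words

section CyclePowerSum

open MvPolynomial

variable {ι σ τ : Type*} [Fintype ι]

theorem content_comp_left (h : σ → τ) (f : ι → σ) :
    content (h ∘ f) = (content f).mapDomain h := by
  simp [content, Finsupp.mapDomain_finsetSum, Finsupp.mapDomain_single]

theorem monomial_content (f : ι → σ) :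
    monomial (content f) (1 : ℤ) = ∏ k, X (f k) :=
  monomial_sum_one univ fun k => Finsupp.single (f k) 1

variable [DecidableEq ι] [Fintype σ] [DecidableEq σ]

variable (σ) in
/-- The power sum symmetric polynomial `p_λ`, where `λ` is the cycle type of `g` (fixed points
included), as the generating function of the words which are constant on the cycles of `g`. -/
noncomputable def cyclePowerSum (g : Equiv.Perm ι) : MvPolynomial σ ℤ :=
  ∑ f : ι → σ with f ∘ g = f, monomial (content f) 1

theorem coeff_cyclePowerSum (g : Equiv.Perm ι) (γ : σ →₀ ℕ) :
    coeff γ (cyclePowerSum σ g) = Nat.card (MulAction.fixedBy (Word ι γ) g) := by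
  simp only [cyclePowerSum, coeff_sum, coeff_monomial, sum_boole, filter_filter, card_fixedBy_word]

theorem isSymmetric_cyclePowerSum (g : Equiv.Perm ι) : (cyclePowerSum σ g).IsSymmetric := by
  intro e
  simp only [cyclePowerSum, map_sum, rename_monomial, ← content_comp_left]
  refine sum_equiv ((Equiv.refl ι).arrowCongr e) ?_ fun _ _ => rfl
  intro f
  simp [_root_.funext_iff]

theorem isHomogeneous_cyclePowerSum (g : Equiv.Perm ι) :
    (cyclePowerSum σ g).IsHomogeneous (Fintype.card ι) :=
  IsHomogeneous.sum _ _ _ fun f _ => isHomogeneous_monomial _ (degree_content f)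

theorem cyclePowerSum_one : cyclePowerSum σ (1 : Equiv.Perm ι) = (∑ s, X s) ^ Fintype.card ι := by
  rw [← card_univ, ← prod_const, prod_univ_sum, Fintype.piFinset_univ, cyclePowerSum]
  simp only [Equiv.Perm.coe_one, Function.comp_id, filter_true, monomial_content]

theorem cyclePowerSum_eq_mul_of_invariant (g : Equiv.Perm ι) (p : ι → Prop) [DecidablePred p]
    (hp : ∀ i, p (g i) ↔ p i) :
    cyclePowerSum σ g = cyclePowerSum σ (g.subtypePerm hp) *
      cyclePowerSum σ (g.subtypePerm (p := fun i => ¬ p i) fun i => not_congr (hp i)) := by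
  have invariant_iff (f : ι → σ) : f ∘ g = f ↔
      (fun i : {i // p i} => f i) ∘ g.subtypePerm hp = (fun i : {i // p i} => f i) ∧
      (fun i : {i // ¬ p i} => f i) ∘ g.subtypePerm (p := fun i => ¬ p i)
        (fun i => not_congr (hp i)) = (fun i : {i // ¬ p i} => f i) := by
    simp only [funext_iff, Subtype.forall, Function.comp_apply, Equiv.Perm.subtypePerm_apply]
    exact ⟨fun h => ⟨fun i _ => h i, fun i _ => h i⟩,
      fun h i => (em (p i)).elim (h.1 i) (h.2 i)⟩
  rw [cyclePowerSum, cyclePowerSum, cyclePowerSum, sum_mul_sum, ← sum_product']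
  refine sum_equiv (Equiv.piEquivPiSubtypeProd p fun _ => σ) ?_ ?_
  · intro f
    simpa using invariant_iff f
  · intro f _
    simp only [monomial_content]
    exact (Fintype.prod_subtype_mul_prod_subtype p fun i => X (f i)).symm

theorem cyclePowerSum_eq_psum [Nonempty ι] {g : Equiv.Perm ι} (hg : g.IsCycleOn Set.univ) :
    cyclePowerSum σ g = psum σ ℤ (Fintype.card ι) := by
  obtain ⟨i₀⟩ := ‹Nonempty ι›
  have constant_of_invariant {f : ι → σ} (hf : f ∘ g = f) : f = Function.const ι (f i₀) := by
    funext i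
    obtain ⟨k, -, rfl⟩ := hg.exists_pow_eq' Set.finite_univ (Set.mem_univ i₀) (Set.mem_univ i)
    rw [Equiv.Perm.coe_pow]
    exact congrFun (Function.iterate_invariant hf k) i₀
  rw [cyclePowerSum, psum]
  refine sum_nbij' (fun f => f i₀) (Function.const ι) ?_ ?_ ?_ ?_ ?_
  · simp
  · exact fun s _ => mem_filter.mpr ⟨mem_univ _, rfl⟩
  · intro f hf
    exact (constant_of_invariant (mem_filter.mp hf).2).symm
  · simp
  · intro f hf
    rw [constant_of_invariant (mem_filter.mp hf).2, monomial_content]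
    simp

theorem exists_cyclePowerSum_eq_psum_mul_of_isCycleOn {g : Equiv.Perm ι} {p : ι → Prop}
    [DecidablePred p] (hg : g.IsCycleOn {i | p i}) (hp : ∃ i, p i) :
    ∃ Q : MvPolynomial σ ℤ, Q.IsSymmetric ∧
      cyclePowerSum σ g = psum σ ℤ #{i | p i} * Q := by
  have : Nonempty {i // p i} := nonempty_subtype.mpr hp
  have restriction_isCycleOn : (g.subtypePerm fun i => hg.apply_mem_iff :
      Equiv.Perm {i // p i}).IsCycleOn Set.univ := hg.subtypePerm
  rw [← Fintype.card_subtype, ← cyclePowerSum_eq_psum restriction_isCycleOn]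
  exact ⟨_, isSymmetric_cyclePowerSum _, cyclePowerSum_eq_mul_of_invariant g p _⟩

theorem exists_cyclePowerSum_eq_psum_mul {g : Equiv.Perm ι} {m : ℕ} (hm : m ∈ g.cycleType) :
    ∃ Q : MvPolynomial σ ℤ, Q.IsSymmetric ∧ cyclePowerSum σ g = psum σ ℤ m * Q := by
  rw [Equiv.Perm.cycleType_def, Multiset.mem_map] at hm
  obtain ⟨c, hc, rfl⟩ := hm
  have support_nonempty := (Equiv.Perm.mem_cycleFactorsFinset_iff.mp hc).1.nonempty_support
  have factorization := exists_cyclePowerSum_eq_psum_mul_of_isCycleOn (σ := σ)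
    (p := fun i => i ∈ c.support) (Equiv.Perm.isCycleOn_support_of_mem_cycleFactorsFinset hc)
    support_nonempty
  rwa [filter_univ_mem] at factorization

variable [Fintype τ] [DecidableEq τ]

theorem sum_coeff_smul_cyclePowerSum_eq_sum_mapDomain (δ : τ →₀ ℕ) :
    ∑ g : Equiv.Perm ι, coeff δ (cyclePowerSum τ g) • cyclePowerSum σ g =
      (Fintype.card ι).factorial • ∑ M ∈ finsuppAntidiag univ (Fintype.card ι) with
        M.mapDomain Prod.fst = δ, monomial (M.mapDomain (Prod.snd : τ × σ → σ)) 1 := by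
  rw [sum_filter, ← sum_sum_invariant_word]
  refine sum_congr rfl fun g _ => ?_
  simp only [← content_comp_left]
  rw [cyclePowerSum, cyclePowerSum, coeff_sum, sum_smul]
  simp only [smul_sum]
  rw [← sum_product']
  refine sum_equiv (Equiv.arrowProdEquivProdArrow ι (fun _ => τ) (fun _ => σ)).symm ?_ ?_
  · intro f
    simp [_root_.funext_iff, forall_and]
  · intro f _
    simp only [coeff_monomial, ite_smul, one_smul, zero_smul]
    rfl

theorem prod_coeff_completeSeries_X (δ : τ →₀ ℕ) :
    ∏ t, PowerSeries.coeff (δ t) (completeSeries (X : σ → MvPolynomial (σ) ℤ)) =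
      ∑ M ∈ finsuppAntidiag univ δ.degree with M.mapDomain Prod.fst = δ,
        monomial (M.mapDomain (Prod.snd : τ × σ → σ)) 1 := by
  have mapDomain_fst (M : τ × σ →₀ ℕ) (t : τ) :
      M.mapDomain Prod.fst t = ∑ i, M (t, i) := by
    simp [Finsupp.mapDomain, Finsupp.sum_fintype, Finsupp.finsetSum_apply, Finsupp.single_apply,
      Fintype.sum_prod_type_right]
  have monomial_mapDomain_snd (M : τ × σ →₀ ℕ) :
      monomial (M.mapDomain Prod.snd) (1 : ℤ) = ∏ t, ∏ i, X i ^ M (t, i) := by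
    simp [Finsupp.mapDomain, Finsupp.sum_fintype, monomial_sum_one, ← X_pow_eq_monomial,
      Fintype.prod_prod_type]
  have mem_iff (M : τ × σ →₀ ℕ) :
      M ∈ {M ∈ finsuppAntidiag (univ : Finset (τ × σ)) δ.degree | M.mapDomain Prod.fst = δ} ↔
        ∀ t, ∑ i, M (t, i) = δ t := by
    rw [mem_filter, mem_finsuppAntidiag, Finsupp.ext_iff, Finsupp.degree_eq_sum,
      Fintype.sum_prod_type]
    simp only [mapDomain_fst, subset_univ, and_true, and_iff_right_iff_imp]
    exact fun h => sum_congr rfl fun t _ => h t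
  simp only [coeff_completeSeries, prod_univ_sum, monomial_mapDomain_snd]
  refine sum_nbij' (fun p => Finsupp.equivFunOnFinite.symm fun q => p q.1 q.2)
    (fun M t => M.curry t) ?_ ?_ ?_ ?_ ?_
  · intro p hp
    simpa [mem_iff] using hp
  · intro M hM
    exact Fintype.mem_piFinset.mpr fun t =>
      mem_finsuppAntidiag.mpr ⟨(mem_iff M).mp hM t, subset_univ _⟩
  · exact fun p _ => funext fun _ => Finsupp.ext fun _ => rfl
  · exact fun M _ => Finsupp.ext fun _ => rfl
  · exact fun p _ => rfl

theorem sum_coeff_smul_cyclePowerSum {δ : τ →₀ ℕ} (hδ : δ.degree = Fintype.card ι) :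
    ∑ g : Equiv.Perm ι, coeff δ (cyclePowerSum τ g) • cyclePowerSum σ g =
      (Fintype.card ι).factorial • ∏ t, PowerSeries.coeff (δ t) (completeSeries X) := by
  rw [sum_coeff_smul_cyclePowerSum_eq_sum_mapDomain, prod_coeff_completeSeries_X, hδ]

end CyclePowerSum

section FrobeniusFunction

open MvPolynomial

variable {N : ℕ}

/-- The exponent vector of the monomial `∏ᵢ Xᵢ ^ (τ i)` in the Vandermonde determinant. -/
noncomputable def permExponent (τ : Equiv.Perm (Fin N)) : Fin N →₀ ℕ :=
  Finsupp.equivFunOnFinite.symm fun i => (τ i : ℕ)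

theorem permExponent_apply (τ : Equiv.Perm (Fin N)) (i : Fin N) : permExponent τ i = τ i := rfl

theorem degree_permExponent (τ : Equiv.Perm (Fin N)) :
    (permExponent τ).degree = ∑ i : Fin N, (i : ℕ) := by
  rw [Finsupp.degree_eq_sum]
  exact Equiv.sum_comp τ fun i => (i : ℕ)

theorem degree_sub_permExponent_add {α : Fin N →₀ ℕ} {τ : Equiv.Perm (Fin N)}
    (hτ : permExponent τ ≤ α) :
    (α - permExponent τ).degree + ∑ i : Fin N, (i : ℕ) = α.degree := by
  rw [← degree_permExponent τ, ← map_add, tsub_add_cancel_of_le hτ]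

theorem det_pow_X_eq_sum (α : Fin N → ℕ) :
    (Matrix.of fun i k => (X k : MvPolynomial (Fin N) ℤ) ^ α i).det =
      ∑ τ : Equiv.Perm (Fin N),
        (Equiv.Perm.sign τ : ℤ) • monomial (Finsupp.equivFunOnFinite.symm (α ∘ τ)) 1 := by
  rw [Matrix.det_apply]
  refine sum_congr rfl fun τ _ => ?_
  rw [monomial_eq, Finsupp.prod_fintype _ _ fun _ => pow_zero _, C_1, one_mul]
  rfl

theorem det_vandermonde_X_eq_sum :
    (Matrix.vandermonde (X : Fin N → MvPolynomial (Fin N) ℤ)).det =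
      ∑ τ : Equiv.Perm (Fin N), (Equiv.Perm.sign τ : ℤ) • monomial (permExponent τ) 1 :=
  (Matrix.det_transpose _).symm.trans (det_pow_X_eq_sum fun i => (i : ℕ))

theorem rename_det_vandermonde_X (e : Equiv.Perm (Fin N)) :
    rename e (Matrix.vandermonde (X : Fin N → MvPolynomial (Fin N) ℤ)).det =
      (Equiv.Perm.sign e : ℤ) • (Matrix.vandermonde X).det := by
  have map_eq_submatrix : (rename e).mapMatrix (Matrix.vandermonde X) =
      (Matrix.vandermonde (X : Fin N → MvPolynomial (Fin N) ℤ)).submatrix e id := by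
    ext1 i j
    simp [Matrix.vandermonde_apply]
  rw [AlgHom.map_det, map_eq_submatrix, Matrix.det_permute]
  simp

theorem coeff_det_vandermonde_mul_eq_zero {Q : MvPolynomial (Fin N) ℤ} (hQ : Q.IsSymmetric)
    {α : Fin N →₀ ℕ} (hα : ¬ Function.Injective α) :
    coeff α ((Matrix.vandermonde X).det * Q) = 0 := by
  obtain ⟨i, j, hαij, hij⟩ := Function.not_injective_iff.mp hα
  have swap_α : α.mapDomain (Equiv.swap i j) = α := by
    ext k
    rw [Finsupp.mapDomain_equiv_apply, Equiv.symm_swap, Equiv.apply_swap_eq_self hαij]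
  have antisymmetric : rename (Equiv.swap i j) ((Matrix.vandermonde X).det * Q) =
      -((Matrix.vandermonde X).det * Q) := by
    rw [map_mul, hQ, rename_det_vandermonde_X, Equiv.Perm.sign_swap hij]
    simp
  have coeff_eq_neg := coeff_rename_mapDomain (Equiv.swap i j) (Equiv.swap i j).injective
    ((Matrix.vandermonde X).det * Q) α
  rw [swap_α, antisymmetric, coeff_neg] at coeff_eq_neg
  lia

theorem coeff_self_det_pow_X {α : Fin N →₀ ℕ} (hα : Function.Injective α) :
    coeff α (Matrix.of fun i k => (X k : MvPolynomial (Fin N) ℤ) ^ α i).det = 1 := by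
  have comp_eq_iff (τ : Equiv.Perm (Fin N)) :
      Finsupp.equivFunOnFinite.symm (α ∘ τ) = α ↔ τ = 1 := by
    rw [Equiv.symm_apply_eq]
    refine ⟨fun h => Equiv.ext fun i => hα (congrFun h i), ?_⟩
    rintro rfl
    rfl
  simp only [det_pow_X_eq_sum, coeff_sum, coeff_smul, coeff_monomial, comp_eq_iff]
  simp

variable {ι : Type*} [Fintype ι] [DecidableEq ι]

/-- Frobenius' formula for the irreducible characters of the symmetric group, up to sign: the
coefficient of `X ^ α` in the product of the Vandermonde determinant with the power sum of the
cycle type of `g`. For strictly decreasing `α` it is the value at `g` of the character of the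
partition `(αᵢ - (N - 1 - i))ᵢ`, up to a sign depending on `N` only. -/
noncomputable def frobeniusFunction (α : Fin N →₀ ℕ) (g : Equiv.Perm ι) : ℤ :=
  coeff α ((Matrix.vandermonde X).det * cyclePowerSum (Fin N) g)

theorem frobeniusFunction_eq_sum (α : Fin N →₀ ℕ) (g : Equiv.Perm ι) :
    frobeniusFunction α g = ∑ τ : Equiv.Perm (Fin N), (Equiv.Perm.sign τ : ℤ) *
      if permExponent τ ≤ α then coeff (α - permExponent τ) (cyclePowerSum (Fin N) g) else 0 := by
  simp only [frobeniusFunction, det_vandermonde_X_eq_sum, sum_mul, coeff_sum, smul_mul_assoc,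
    coeff_smul, coeff_monomial_mul', one_mul, smul_eq_mul]

theorem injective_of_frobeniusFunction_ne_zero {α : Fin N →₀ ℕ} {g : Equiv.Perm ι}
    (h : frobeniusFunction α g ≠ 0) : Function.Injective α :=
  not_imp_comm.mp (coeff_det_vandermonde_mul_eq_zero (isSymmetric_cyclePowerSum g)) h

theorem degree_of_frobeniusFunction_ne_zero {α : Fin N →₀ ℕ} {g : Equiv.Perm ι}
    (h : frobeniusFunction α g ≠ 0) : α.degree = (∑ i : Fin N, (i : ℕ)) + Fintype.card ι := by
  rw [frobeniusFunction_eq_sum] at h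
  obtain ⟨τ, -, hτ⟩ := exists_ne_zero_of_sum_ne_zero h
  obtain ⟨τ_le, coeff_ne_zero⟩ := ite_ne_right_iff.mp (right_ne_zero_of_mul hτ)
  have degree_sub : (α - permExponent τ).degree = Fintype.card ι :=
    not_imp_comm.mp (isHomogeneous_cyclePowerSum g).coeff_eq_zero coeff_ne_zero
  rw [← degree_sub_permExponent_add τ_le, degree_sub, add_comm]

theorem sum_frobeniusFunction_smul_cyclePowerSum {α : Fin N →₀ ℕ}
    (hα : α.degree = (∑ i : Fin N, (i : ℕ)) + Fintype.card ι) :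
    ∑ g : Equiv.Perm ι, frobeniusFunction α g • cyclePowerSum (Fin N) g =
      (Fintype.card ι).factorial • (jacobiTrudi X α).det := by
  have term_eq (τ : Equiv.Perm (Fin N)) :
      ∑ g : Equiv.Perm ι, (if permExponent τ ≤ α then
          coeff (α - permExponent τ) (cyclePowerSum (Fin N) g) else 0) • cyclePowerSum (Fin N) g =
        (Fintype.card ι).factorial • ∏ i, jacobiTrudi X α i (τ i) := by
    simp only [jacobiTrudi, Matrix.of_apply, PowerSeries.coeff_X_pow_mul']
    rw [Finset.prod_ite_zero]
    by_cases hτ : permExponent τ ≤ α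
    · have degree_sub : (α - permExponent τ).degree = Fintype.card ι := by
        have := degree_sub_permExponent_add hτ
        lia
      have forall_le : ∀ i ∈ univ, (τ i : ℕ) ≤ α i := fun i _ => hτ i
      rw [if_pos forall_le]
      simpa [hτ, permExponent_apply] using sum_coeff_smul_cyclePowerSum degree_sub
    · rw [if_neg fun h => hτ fun i => h i (mem_univ i)]
      simp [hτ]
  rw [← Matrix.det_transpose, Matrix.det_apply, smul_sum]
  simp only [frobeniusFunction_eq_sum, sum_smul, mul_smul]
  rw [sum_comm]
  refine sum_congr rfl fun τ _ => ?_
  rw [← smul_sum, term_eq]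
  exact smul_comm _ _ _

theorem sum_frobeniusFunction_sq {α : Fin N →₀ ℕ} (hα : Function.Injective α)
    (hdeg : α.degree = (∑ i : Fin N, (i : ℕ)) + Fintype.card ι) :
    ∑ g : Equiv.Perm ι, frobeniusFunction α g ^ 2 = (Fintype.card ι).factorial := by
  have frobenius_formula : ∑ g : Equiv.Perm ι,
      frobeniusFunction α g • ((Matrix.vandermonde X).det * cyclePowerSum (Fin N) g) =
        (Fintype.card ι).factorial • (Matrix.of fun i k => X k ^ α i).det := by
    rw [← det_jacobiTrudi_mul_det_vandermonde, ← smul_mul_assoc,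
      ← sum_frobeniusFunction_smul_cyclePowerSum hdeg, sum_mul]
    simp only [mul_comm (Matrix.det _), smul_mul_assoc]
  have coeff_formula := congrArg (coeff α) frobenius_formula
  simp only [coeff_sum, coeff_smul, coeff_self_det_pow_X hα] at coeff_formula
  simpa [sq, frobeniusFunction] using coeff_formula

end FrobeniusFunction

section HookLength

variable {N : ℕ}

/-- The hook lengths in row `i` of the partition encoded by the set of first-column hook lengths
`{α₁, …, α_N}`: the `m` such that `αᵢ - m` is a natural number outside this set. -/
def hookLengths (α : Fin N → ℕ) (i : Fin N) : Finset ℕ :=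
  {m ∈ Ico 1 (α i + 1) | ∀ j, α j + m ≠ α i}

theorem factorial_eq_prod_hookLengths_mul {α : Fin N → ℕ} (hα : Function.Injective α) (i : Fin N) :
    (α i).factorial = (∏ m ∈ hookLengths α i, m) * ∏ j with α j < α i, (α i - α j) := by
  rw [← prod_Ico_id_eq_factorial, hookLengths,
    ← prod_filter_mul_prod_filter_not (Ico 1 (α i + 1)) fun m => ∀ j, α j + m ≠ α i]
  congr 1
  symm
  refine prod_nbij (fun j => α i - α j) ?_ ?_ ?_ fun _ _ => rfl
  · intro j hj
    have hj : α j < α i := by simpa using hj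
    simp only [mem_filter, mem_Ico, not_forall, not_not]
    exact ⟨by lia, j, by lia⟩
  · intro j hj k hk hjk
    have hj : α j < α i := by simpa using hj
    have hk : α k < α i := by simpa using hk
    exact hα ((tsub_right_inj hj.le hk.le).mp hjk)
  · intro m hm
    simp only [coe_filter, mem_Ico, not_forall, not_not, Set.mem_ofPred_eq] at hm
    obtain ⟨hm, j, hj⟩ := hm
    exact ⟨j, mem_coe.mpr (mem_filter.mpr ⟨mem_univ j, by lia⟩), Nat.sub_eq_of_eq_add' hj.symm⟩

theorem natAbs_det_vandermonde {α : Fin N → ℕ} (hα : Function.Injective α) :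
    (Matrix.vandermonde fun i => (α i : ℤ)).det.natAbs =
      ∏ i, ∏ j with α j < α i, (α i - α j) := by
  rw [Matrix.det_vandermonde, ← Int.natAbsHom_apply]
  simp only [map_prod, Int.natAbsHom_apply]
  rw [prod_sigma', prod_sigma']
  have ne_of_lt {i j : Fin N} (hij : i < j) : α i ≠ α j := hα.ne hij.ne
  refine prod_bij' (fun q _ => if α q.2 < α q.1 then q else ⟨q.2, q.1⟩)
    (fun q _ => if q.1 < q.2 then q else ⟨q.2, q.1⟩) ?_ ?_ ?_ ?_ ?_ <;>
  simp only [mem_sigma, mem_univ, mem_Ioi, mem_filter, true_and, Sigma.forall] <;> grind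

open MvPolynomial in
theorem coeff_sum_X_pow_mul_prod_factorial (γ : Fin N →₀ ℕ) :
    coeff γ ((∑ i, X i : MvPolynomial (Fin N) ℤ) ^ γ.degree) * ∏ i, ((γ i).factorial : ℤ) =
      γ.degree.factorial := by
  have mem_antidiag : ⇑γ ∈ piAntidiag univ γ.degree := by
    simp [Finsupp.degree_eq_sum]
  have coeff_eq : coeff γ ((∑ i, X i : MvPolynomial (Fin N) ℤ) ^ γ.degree) =
      Nat.multinomial univ γ := by
    rw [sum_pow_eq_sum_piAntidiag, coeff_sum, sum_eq_single_of_mem _ mem_antidiag]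
    · rw [← map_natCast C, coeff_C_mul, coeff_prod_X_pow, if_pos (by ext; simp)]
      simp
    · intro k _ hk
      rw [← map_natCast C, coeff_C_mul, coeff_prod_X_pow, if_neg, mul_zero]
      rintro rfl
      exact hk (by ext; simp)
  rw [coeff_eq, Finsupp.degree_eq_sum, ← Nat.multinomial_spec, mul_comm]
  push_cast
  rfl

theorem det_descFactorial (α : Fin N → ℕ) :
    (Matrix.of fun i (j : Fin N) => ((α i).descFactorial j : ℤ)).det =
      (Matrix.vandermonde fun i => (α i : ℤ)).det := by
  rw [Matrix.det_eval_matrixOfPolynomials_eq_det_vandermonde _ (fun j => descPochhammer ℤ j)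
    (fun j => descPochhammer_natDegree ℤ j) (fun j => monic_descPochhammer ℤ j)]
  simp only [descPochhammer_eval_eq_descFactorial]

variable {ι : Type*} [Fintype ι] [DecidableEq ι]

theorem frobeniusFunction_one_mul_prod_factorial {α : Fin N →₀ ℕ}
    (hα : α.degree = (∑ i : Fin N, (i : ℕ)) + Fintype.card ι) :
    frobeniusFunction α (1 : Equiv.Perm ι) * ∏ i, ((α i).factorial : ℤ) =
      (Fintype.card ι).factorial * (Matrix.vandermonde fun i => (α i : ℤ)).det := by
  have term_eq (τ : Equiv.Perm (Fin N)) :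
      (if permExponent τ ≤ α then MvPolynomial.coeff (α - permExponent τ)
          (cyclePowerSum (Fin N) (1 : Equiv.Perm ι)) else 0) * ∏ i, ((α i).factorial : ℤ) =
        (Fintype.card ι).factorial * ∏ i, ((α i).descFactorial (τ i) : ℤ) := by
    by_cases hτ : permExponent τ ≤ α
    · have degree_sub : (α - permExponent τ).degree = Fintype.card ι := by
        have := degree_sub_permExponent_add hτ
        lia
      have factorial_eq (i : Fin N) : ((α i).factorial : ℤ) =
          ((α - permExponent τ) i).factorial * (α i).descFactorial (τ i) := by
        exact_mod_cast (Nat.factorial_mul_descFactorial (hτ i)).symm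
      have multinomial := coeff_sum_X_pow_mul_prod_factorial (α - permExponent τ)
      rw [degree_sub] at multinomial
      rw [if_pos hτ, cyclePowerSum_one, ← multinomial, mul_assoc, ← prod_mul_distrib]
      simp only [factorial_eq]
    · obtain ⟨i, hi⟩ := not_forall.mp hτ
      have descFactorial_eq_zero : ((α i).descFactorial (τ i) : ℤ) = 0 := by
        exact_mod_cast Nat.descFactorial_of_lt (not_le.mp hi)
      rw [if_neg hτ, zero_mul, prod_eq_zero (f := fun i => ((α i).descFactorial (τ i) : ℤ))
        (mem_univ i) descFactorial_eq_zero, mul_zero]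
  rw [frobeniusFunction_eq_sum, ← det_descFactorial, ← Matrix.det_transpose, Matrix.det_apply',
    sum_mul, mul_sum]
  refine sum_congr rfl fun τ _ => ?_
  rw [mul_assoc, term_eq, mul_left_comm]
  rfl

/-- The product of all hook lengths of the partition encoded by `α`. -/
def hookProduct (α : Fin N → ℕ) : ℕ :=
  ∏ i, ∏ m ∈ hookLengths α i, m

theorem natAbs_frobeniusFunction_one_mul_hookProduct {α : Fin N →₀ ℕ} (hα : Function.Injective α)
    (hdeg : α.degree = (∑ i : Fin N, (i : ℕ)) + Fintype.card ι) :
    (frobeniusFunction α (1 : Equiv.Perm ι)).natAbs * hookProduct α =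
      (Fintype.card ι).factorial := by
  have vandermonde_pos : 0 < ∏ i, ∏ j with α j < α i, (α i - α j) :=
    prod_pos fun i _ => prod_pos fun j hj => Nat.sub_pos_of_lt (mem_filter.mp hj).2
  have prod_factorial_eq : ∏ i, (α i).factorial =
      hookProduct α * ∏ i, ∏ j with α j < α i, (α i - α j) := by
    rw [hookProduct, ← prod_mul_distrib]
    exact prod_congr rfl fun i _ => factorial_eq_prod_hookLengths_mul hα i
  have determinant_formula := congrArg Int.natAbs
    (frobeniusFunction_one_mul_prod_factorial (ι := ι) hdeg)
  rw [Int.natAbs_mul, Int.natAbs_mul, natAbs_det_vandermonde hα, Int.natAbs_natCast,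
    ← Nat.cast_prod, Int.natAbs_natCast, prod_factorial_eq, ← mul_assoc] at determinant_formula
  exact Nat.eq_of_mul_eq_mul_right vandermonde_pos determinant_formula

open MvPolynomial in
theorem exists_mem_hookLengths_of_frobeniusFunction_ne_zero {α : Fin N →₀ ℕ} {g : Equiv.Perm ι}
    (h : frobeniusFunction α g ≠ 0) {m : ℕ} (hm : m ∈ g.cycleType) : ∃ i, m ∈ hookLengths α i := by
  obtain ⟨Q, hQ, factorization⟩ := exists_cyclePowerSum_eq_psum_mul (σ := Fin N) hm
  have expansion : frobeniusFunction α g = ∑ i, if Finsupp.single i m ≤ α then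
      coeff (α - Finsupp.single i m) ((Matrix.vandermonde X).det * Q) else 0 := by
    rw [frobeniusFunction, factorization, mul_left_comm, psum, sum_mul, coeff_sum]
    simp only [X_pow_eq_monomial, coeff_monomial_mul', one_mul]
  rw [expansion] at h
  obtain ⟨i, -, hi⟩ := exists_ne_zero_of_sum_ne_zero h
  obtain ⟨single_le, coeff_ne_zero⟩ := ite_ne_right_iff.mp hi
  have injective_sub : Function.Injective (α - Finsupp.single i m) :=
    not_imp_comm.mp (coeff_det_vandermonde_mul_eq_zero hQ) coeff_ne_zero
  have m_pos : 0 < m := Nat.zero_lt_of_lt (Equiv.Perm.one_lt_of_mem_cycleType hm)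
  have m_le : m ≤ α i := Finsupp.single_le_iff.mp single_le
  refine ⟨i, mem_filter.mpr ⟨mem_Ico.mpr ⟨m_pos, Nat.lt_succ_of_le m_le⟩, fun j hj => ?_⟩⟩
  have j_ne : j ≠ i := by
    rintro rfl
    lia
  refine j_ne (injective_sub ?_)
  simp only [Finsupp.tsub_apply, Finsupp.single_eq_same, Finsupp.single_eq_of_ne j_ne]
  lia

theorem orderOf_dvd_hookProduct {α : Fin N →₀ ℕ} {g : Equiv.Perm ι}
    (h : frobeniusFunction α g ≠ 0) : orderOf g ∣ hookProduct α := by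
  rw [← Equiv.Perm.lcm_cycleType, Multiset.lcm_dvd]
  intro m hm
  obtain ⟨i, hi⟩ := exists_mem_hookLengths_of_frobeniusFunction_ne_zero h hm
  exact (dvd_prod_of_mem (fun m => m) hi).trans
    (dvd_prod_of_mem (fun i => ∏ m ∈ hookLengths α i, m) (mem_univ i))

end HookLength

section ComplexConjugation

open scoped ComplexOrder Matrix

variable {𝕜 G : Type*} [RCLike 𝕜] [Group G] [Finite G]

theorem exists_posDef_conjTranspose_mul_mul_eq {n : Type*} [Fintype n] [DecidableEq n]
    (M : G →* Matrix n n 𝕜) : ∃ P : Matrix n n 𝕜, P.PosDef ∧ ∀ g, (M g)ᴴ * P * M g = P := by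
  have : Fintype G := Fintype.ofFinite G
  refine ⟨∑ h, (M h)ᴴ * M h, ?_, fun g => ?_⟩
  · refine Matrix.posDef_sum univ_nonempty fun h _ => ?_
    exact .conjTranspose_mul_self _
      (Matrix.mulVec_injective_of_isUnit ((Group.isUnit h).map M))
  · rw [mul_sum, sum_mul, ← Equiv.sum_comp (Equiv.mulRight g) fun h => (M h)ᴴ * M h]
    simp only [Equiv.coe_mulRight, map_mul, Matrix.conjTranspose_mul, mul_assoc]

theorem star_trace_eq_trace_inv {n : Type*} [Fintype n] [DecidableEq n] (M : G →* Matrix n n 𝕜)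
    (g : G) : star (M g).trace = (M g⁻¹).trace := by
  obtain ⟨P, hP, invariant⟩ := exists_posDef_conjTranspose_mul_mul_eq M
  have isUnit_det : IsUnit P.det := (Matrix.isUnit_iff_isUnit_det P).mp hP.isUnit
  have intertwine : (M g)ᴴ * P = P * M g⁻¹ := by
    conv_rhs => rw [← invariant g, mul_assoc, ← map_mul, mul_inv_cancel, map_one, mul_one]
  calc star (M g).trace = ((M g)ᴴ * P * P⁻¹).trace := by
        rw [Matrix.mul_nonsing_inv_cancel_right _ _ isUnit_det, Matrix.trace_conjTranspose]
    _ = (M g⁻¹).trace := by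
        rw [intertwine, Matrix.trace_mul_comm, Matrix.nonsing_inv_mul_cancel_left _ _ isUnit_det]

theorem star_character {W : Type*} [AddCommGroup W] [Module 𝕜 W] [FiniteDimensional 𝕜 W]
    (ρ : Representation 𝕜 G W) (g : G) : star (ρ.character g) = ρ.character g⁻¹ := by
  let b := Module.finBasis 𝕜 W
  have trace_eq (h : G) :
      ρ.character h = ((LinearMap.toMatrixAlgEquiv b).toMonoidHom.comp ρ h).trace :=
    LinearMap.trace_eq_matrix_trace 𝕜 b (ρ h)
  rw [trace_eq, trace_eq, star_trace_eq_trace_inv]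

end ComplexConjugation

section PermutationRepresentation

variable {K G X : Type*} [Field K] [Group G] [MulAction G X] [Finite X]

theorem character_ofMulAction (g : G) :
    (Representation.ofMulAction K G X).character g = Nat.card (MulAction.fixedBy X g) := by
  classical
  have : Fintype X := Fintype.ofFinite X
  rw [Representation.character, LinearMap.trace_eq_matrix_trace K (MonoidAlgebra.basis X K),
    Matrix.trace, Nat.card_eq_fintype_card, ← Set.toFinset_card]
  simp [LinearMap.toMatrix_apply, MonoidAlgebra.basis, Finsupp.single_apply]

theorem exists_sum_character_mul_card_fixedBy_eq [Fintype G] [NeZero (Nat.card G : K)]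
    {W : Type*} [AddCommGroup W] [Module K W]
    [FiniteDimensional K W] (ρ : Representation K G W) :
    ∃ k : ℕ, ∑ g, ρ.character g * Nat.card (MulAction.fixedBy X g) = Nat.card G * k := by
  have : Invertible (Nat.card G : K) := invertibleOfNonzero (NeZero.ne _)
  have : FiniteDimensional K (MonoidAlgebra K X) := .of_basis (MonoidAlgebra.basis X K)
  have average := (ρ.tprod (Representation.ofMulAction K G X)).card_inv_mul_sum_char_eq_finrank
  simp only [Representation.char_tensor, Pi.mul_apply, character_ofMulAction] at average
  exact ⟨_, (inv_mul_eq_iff_eq_mul₀ (NeZero.ne _)).mp average⟩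

end PermutationRepresentation

theorem sq_eq_one_and_eq_mul_of_sum_mul_eq {G : Type*} [Fintype G] {χ : G → ℂ} {ψ : G → ℤ} {c : ℝ}
    {k : ℤ} (hc : 0 < c) (hk : k ≠ 0) (hχ : ∑ g, Complex.normSq (χ g) = c)
    (hψ : ∑ g, (ψ g : ℝ) ^ 2 = c) (hχψ : ∑ g, χ g * ψ g = c * k) :
    k ^ 2 = 1 ∧ ∀ g, χ g = k * ψ g := by
  have re_inner : ∑ g, (χ g).re * ψ g = c * k := by
    simpa using congrArg Complex.re hχψ
  have defect : ∑ g, Complex.normSq (χ g - k * ψ g) = c * (1 - (k : ℝ) ^ 2) := by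
    have expand (g : G) : Complex.normSq (χ g - k * ψ g) =
        Complex.normSq (χ g) - 2 * k * ((χ g).re * ψ g) + k ^ 2 * (ψ g : ℝ) ^ 2 := by
      simp only [Complex.normSq_apply, Complex.sub_re, Complex.sub_im, Complex.mul_re,
        Complex.mul_im, Complex.intCast_re, Complex.intCast_im]
      ring
    simp only [expand, sum_add_distrib, sum_sub_distrib, ← mul_sum, hχ, hψ, re_inner]
    ring
  have defect_nonneg : 0 ≤ c * (1 - (k : ℝ) ^ 2) :=
    defect ▸ sum_nonneg fun g _ => Complex.normSq_nonneg _
  have sq_le_one : k ^ 2 ≤ 1 := by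
    exact_mod_cast sub_nonneg.mp (nonneg_of_mul_nonneg_right defect_nonneg hc)
  have sq_eq_one : k ^ 2 = 1 := by
    have := pow_pos (abs_pos.mpr hk) 2
    rw [sq_abs] at this
    lia
  have cast_sq_eq_one : (k : ℝ) ^ 2 = 1 := by exact_mod_cast sq_eq_one
  rw [cast_sq_eq_one, sub_self, mul_zero,
    sum_eq_zero_iff_of_nonneg fun g _ => Complex.normSq_nonneg _] at defect
  exact ⟨sq_eq_one, fun g => sub_eq_zero.mp (Complex.normSq_eq_zero.mp (defect g (mem_univ g)))⟩

section Irreducible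

variable {G : Type*} [Group G] (V : FDRep ℂ G) [CategoryTheory.Simple V]

theorem sum_normSq_character [Fintype G] : ∑ g, Complex.normSq (V.character g) = Nat.card G := by
  have card_ne_zero : (Nat.card G : ℂ) ≠ 0 := Nat.cast_ne_zero.mpr Nat.card_pos.ne'
  have : Invertible (Nat.card G : ℂ) := invertibleOfNonzero card_ne_zero
  have normSq_eq (g : G) :
      (Complex.normSq (V.character g) : ℂ) = V.character g * V.character g⁻¹ := by
    rw [← Complex.mul_conj]
    exact congrArg _ (star_character V.ρ g)
  have orthonormal := FDRep.char_orthonormal V V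
  rw [if_pos ⟨CategoryTheory.Iso.refl V⟩, inv_mul_eq_iff_eq_mul₀ card_ne_zero, mul_one]
    at orthonormal
  simp only [← normSq_eq] at orthonormal
  exact_mod_cast orthonormal

theorem character_one_ne_zero [Finite G] : V.character 1 ≠ 0 := by
  have : Fintype G := Fintype.ofFinite G
  intro h
  rw [FDRep.char_one, Nat.cast_eq_zero] at h
  have : Subsingleton V := Module.finrank_zero_iff.mp h
  have character_eq_zero (g : G) : V.character g = 0 := by
    rw [FDRep.character, Subsingleton.elim (V.ρ g) 0, map_zero]
  have norm_eq := sum_normSq_character V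
  simp only [character_eq_zero, map_zero, sum_const_zero] at norm_eq
  exact Nat.card_pos.ne (by exact_mod_cast norm_eq)

end Irreducible

section SymmetricGroup

variable {ι : Type*} [Fintype ι] [DecidableEq ι]

theorem exists_sum_character_mul_frobeniusFunction_eq {K W : Type*} [Field K] [CharZero K]
    [AddCommGroup W] [Module K W] [FiniteDimensional K W]
    (ρ : Representation K (Equiv.Perm ι) W) {N : ℕ} (α : Fin N →₀ ℕ) :
    ∃ k : ℤ, ∑ g, ρ.character g * frobeniusFunction α g = (Fintype.card ι).factorial * k := by
  have card_perm : Nat.card (Equiv.Perm ι) = (Fintype.card ι).factorial := by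
    rw [Nat.card_eq_fintype_card, Fintype.card_perm]
  choose m hm using fun γ : Fin N →₀ ℕ =>
    exists_sum_character_mul_card_fixedBy_eq (X := Word ι γ) ρ
  refine ⟨∑ τ : Equiv.Perm (Fin N), (Equiv.Perm.sign τ : ℤ) *
    if permExponent τ ≤ α then m (α - permExponent τ) else 0, ?_⟩
  simp only [frobeniusFunction_eq_sum, Int.cast_sum, mul_sum]
  rw [sum_comm]
  refine sum_congr rfl fun τ _ => ?_
  split_ifs
  · simp only [coeff_cyclePowerSum, Int.cast_mul, Int.cast_natCast,
      mul_left_comm _ ((Equiv.Perm.sign τ : ℤ) : K), ← mul_sum, hm, card_perm]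
  · simp

theorem coeff_content_cyclePowerSum_ne_zero_iff {σ : Type*} [Fintype σ] [DecidableEq σ]
    {f : ι → σ} (hf : Function.Injective f) (g : Equiv.Perm ι) :
    MvPolynomial.coeff (content f) (cyclePowerSum σ g) ≠ 0 ↔ g = 1 := by
  rw [coeff_cyclePowerSum, Nat.cast_ne_zero, Nat.card_ne_zero,
    and_iff_left (inferInstanceAs (Finite (MulAction.fixedBy _ g)))]
  constructor
  · rintro ⟨w, hw⟩
    obtain ⟨e, he⟩ := exists_perm_of_content_eq w.2
    have injective_w : Function.Injective w.1 := he ▸ hf.comp e.injective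
    exact Equiv.ext fun i => injective_w (congrFun ((mem_fixedBy_word_iff g w).mp hw) i)
  · rintro rfl
    exact ⟨⟨f, rfl⟩, one_smul _ _⟩

open MvPolynomial in
theorem exists_sum_mul_frobeniusFunction_ne_zero {R : Type*} [CommRing R] [IsDomain R] [CharZero R]
    {c : Equiv.Perm ι → R} (hc : c 1 ≠ 0) :
    ∃ α : Fin (Fintype.card ι) →₀ ℕ, ∑ g, c g * frobeniusFunction α g ≠ 0 := by
  let castPoly := MvPolynomial.map (σ := Fin (Fintype.card ι)) (Int.castRingHom R)
  let e := Fintype.equivFin ι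
  have vandermonde_ne_zero : castPoly (Matrix.vandermonde X).det ≠ 0 :=
    (map_ne_zero_iff _ (map_injective _ Int.cast_injective)).mpr
      (Matrix.det_vandermonde_ne_zero_iff.mpr (X_injective (R := ℤ)))
  have sum_ne_zero : ∑ g, C (c g) * castPoly (cyclePowerSum _ g) ≠ 0 := by
    refine fun h => ?_
    have coeff_eq_zero := congrArg (coeff (content e)) h
    simp only [coeff_sum, coeff_C_mul, castPoly, coeff_map, coeff_zero] at coeff_eq_zero
    rw [sum_eq_single_of_mem 1 (mem_univ _) fun g _ hg => by
      rw [not_ne_iff.mp ((coeff_content_cyclePowerSum_ne_zero_iff e.injective g).not.mpr hg),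
        map_zero, mul_zero]] at coeff_eq_zero
    exact mul_ne_zero hc (Int.cast_ne_zero.mpr
      ((coeff_content_cyclePowerSum_ne_zero_iff e.injective 1).mpr rfl)) coeff_eq_zero
  obtain ⟨α, hα⟩ := exists_coeff_ne_zero (mul_ne_zero vandermonde_ne_zero sum_ne_zero)
  refine ⟨α, fun h => hα (h ▸ ?_)⟩
  rw [mul_sum, coeff_sum]
  refine sum_congr rfl fun g _ => ?_
  rw [mul_left_comm, coeff_C_mul, ← map_mul, coeff_map]
  rfl

theorem exists_character_eq_mul_frobeniusFunction (V : FDRep ℂ (Equiv.Perm ι))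
    [CategoryTheory.Simple V] :
    ∃ α : Fin (Fintype.card ι) →₀ ℕ, ∃ k : ℤ, k ^ 2 = 1 ∧
      ∀ g, V.character g = k * frobeniusFunction α g := by
  obtain ⟨α, inner_ne_zero⟩ := exists_sum_mul_frobeniusFunction_ne_zero (character_one_ne_zero V)
  obtain ⟨k, hk⟩ := exists_sum_character_mul_frobeniusFunction_eq V.ρ α
  have k_ne_zero : k ≠ 0 := by
    rintro rfl
    exact inner_ne_zero (hk.trans (by simp))
  obtain ⟨g, -, hg⟩ := exists_ne_zero_of_sum_ne_zero inner_ne_zero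
  have frobeniusFunction_ne_zero := Int.cast_ne_zero.mp (right_ne_zero_of_mul hg)
  have norm_character :
      ∑ g, Complex.normSq (V.character g) = (Fintype.card ι).factorial := by
    rw [sum_normSq_character, Nat.card_eq_fintype_card, Fintype.card_perm]
  have norm_frobeniusFunction : ∑ g : Equiv.Perm ι, (frobeniusFunction α g : ℝ) ^ 2 =
      (Fintype.card ι).factorial := by
    exact_mod_cast sum_frobeniusFunction_sq
      (injective_of_frobeniusFunction_ne_zero frobeniusFunction_ne_zero)
      (degree_of_frobeniusFunction_ne_zero frobeniusFunction_ne_zero)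
  exact ⟨α, k, sq_eq_one_and_eq_mul_of_sum_mul_eq (by positivity) k_ne_zero norm_character
    norm_frobeniusFunction (by exact_mod_cast hk)⟩

end SymmetricGroup

end SymmetricGroupCharacter

open SymmetricGroupCharacter in
theorem orderOf_mul_degree_dvd_card_of_char_ne_zero_symmetricGroup_general
    {ι : Type*} [Fintype ι] (V : FDRep ℂ (Equiv.Perm ι)) [CategoryTheory.Simple V]
    {g : Equiv.Perm ι} (hg : V.character g ≠ 0) :
    orderOf g * Module.finrank ℂ V ∣ (Fintype.card ι).factorial := by
  classical
  obtain ⟨α, k, k_sq, character_eq⟩ := exists_character_eq_mul_frobeniusFunction V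
  have frobeniusFunction_ne_zero : frobeniusFunction α g ≠ 0 := by
    rw [character_eq] at hg
    exact Int.cast_ne_zero.mp (right_ne_zero_of_mul hg)
  have finrank_eq : Module.finrank ℂ V = (frobeniusFunction α (1 : Equiv.Perm ι)).natAbs := by
    have finrank_eq_mul :
        (Module.finrank ℂ V : ℤ) = k * frobeniusFunction α (1 : Equiv.Perm ι) := by
      exact_mod_cast V.char_one.symm.trans (character_eq 1)
    rw [← Int.natAbs_natCast (Module.finrank ℂ V), finrank_eq_mul, Int.natAbs_mul,
      Int.isUnit_iff_natAbs_eq.mp (IsUnit.of_mul_eq_one k (by rwa [← sq])), one_mul]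
  rw [finrank_eq, mul_comm, ← natAbs_frobeniusFunction_one_mul_hookProduct
    (injective_of_frobeniusFunction_ne_zero frobeniusFunction_ne_zero)
    (degree_of_frobeniusFunction_ne_zero frobeniusFunction_ne_zero)]
  exact mul_dvd_mul_left _ (orderOf_dvd_hookProduct frobeniusFunction_ne_zero)

/-- If `χ` is an irreducible complex character of the symmetric group `Sₙ`
(`n ≥ 1`) and `g ∈ Sₙ` satisfies `χ(g) ≠ 0`, then `o(g)·χ(1)` divides `n! = |Sₙ|`. -/
theorem orderOf_mul_degree_dvd_card_of_char_ne_zero_symmetricGroup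
    (n : ℕ) (hn : 1 ≤ n)
    (V : FDRep ℂ (Equiv.Perm (Fin n))) (hV : CategoryTheory.Simple V)
    (g : Equiv.Perm (Fin n)) (hg : V.character g ≠ 0) :
    orderOf g * Module.finrank ℂ V ∣ Nat.factorial n := by
  simpa only [Fintype.card_fin] using
    orderOf_mul_degree_dvd_card_of_char_ne_zero_symmetricGroup_general V hg
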